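/- arXiv:2308.03214 — 4 statements merged into one kernel-verified Lean document; each statement's English description precedes it below -/
import Mathlib

section
/- Suppose additionally that there is a subset B of M that is R-linearly independent and spans N (so N is free as an R-module with basis B), together with subsets B_i ⊆ B such that N_i is the R-span of B_i for each 1 ≤ i ≤ w. Then the Mayer–Vietoris complex is acyclic: d_0 : M → M/N is surjective, ker d_0 = range d_1, and ker d_p = range d_{p+1} for every 1 ≤ p ≤ w (where d_{w+1} := 0). -/
open DirectSum

section MayerVietoris

variable {R : Type*} [Ring R] {M : Type*} [AddCommGroup M] [Module R M]

/-- `N_S := ⋂_{i ∈ S} N_i` (with `N_∅ = M`, i.e. the top submodule). -/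
abbrev MVsummand {w : ℕ} (N : Fin w → Submodule R M) (S : Finset (Fin w)) :
    Submodule R M := ⨅ i ∈ S, N i

/-- The degree-`p` term `C_p = ⨁_{|S| = p} N_S` of the Mayer–Vietoris complex
(for `0 ≤ p`; the term `C₋₁ = M ⧸ N` is treated separately). -/
abbrev MVC {w : ℕ} (N : Fin w → Submodule R M) (p : ℕ) : Type _ :=
  ⨁ (S : {S : Finset (Fin w) // S.card = p}), ↥(MVsummand N S.1)

/-- The inclusion `ι : N_S → N_T` for `T ⊆ S`. -/
def MVincl {w : ℕ} (N : Fin w → Submodule R M) {S T : Finset (Fin w)} (h : T ⊆ S) :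
    ↥(MVsummand N S) →ₗ[R] ↥(MVsummand N T) :=
  Submodule.inclusion (le_iInf₂ fun i hi => iInf₂_le i (h hi))

/-- The differential `d_{p+1} : C_{p+1} → C_p`, given on the summand `N_S` by
`x ↦ Σ_{j ∈ S} (−1)^{#(S,j)} ι_{(S,j)}(x)`, where `#(S,j) = |{i ∈ S : i < j}|`. -/
noncomputable def MVd {w : ℕ} (N : Fin w → Submodule R M) (p : ℕ) :
    MVC N (p + 1) →ₗ[R] MVC N p :=
  DirectSum.toModule R _ _ fun S =>
    ∑ j ∈ S.1.attach,
      ((-1 : ℤ) ^ (S.1.filter (· < j.1)).card) •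
        ((DirectSum.lof R {T : Finset (Fin w) // T.card = p}
            (fun T => ↥(MVsummand N T.1))
            ⟨S.1.erase j.1, by simp [Finset.card_erase_of_mem j.2, S.2]⟩).comp
          (MVincl N (Finset.erase_subset _ _)))

/-- The differential `d_0 : C_0 = M → M ⧸ N` (where `N = N₁ + ⋯ + N_w`),
the quotient map. -/
noncomputable def MVd0 {w : ℕ} (N : Fin w → Submodule R M) :
    MVC N 0 →ₗ[R] M ⧸ (⨆ i, N i) :=
  DirectSum.toModule R _ _ fun S =>
    (Submodule.mkQ (⨆ i, N i)).comp (MVsummand N S.1).subtype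



/-- The sign `(-1)^{#{i ∈ T : i < j}}`. -/
def MVeps {w : ℕ} (T : Finset (Fin w)) (j : Fin w) : ℤ := (-1) ^ (T.filter (· < j)).card

theorem MVeps_sq {w : ℕ} (T : Finset (Fin w)) (j : Fin w) : MVeps T j * MVeps T j = 1 := by
  unfold MVeps
  rw [← pow_add, ← two_mul, pow_mul]; simp

theorem MVeps_insert {w : ℕ} (T : Finset (Fin w)) (j i : Fin w) (h : j ∉ T) :
    MVeps (insert j T) i = (if j < i then -1 else 1) * MVeps T i := by
  unfold MVeps
  rw [Finset.filter_insert]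
  split_ifs with hji
  · rw [Finset.card_insert_of_notMem (by simp [h]), pow_succ]; ring
  · simp

theorem MVeps_swap {w : ℕ} (T : Finset (Fin w)) (j i : Fin w) (hj : j ∉ T) (hi : i ∉ T)
    (hij : i ≠ j) :
    MVeps T j * MVeps (insert j T) i = - (MVeps T i * MVeps (insert i T) j) := by
  rw [MVeps_insert T j i hj, MVeps_insert T i j hi]
  rcases lt_or_gt_of_ne hij with h | h
  · rw [if_neg (not_lt.2 h.le), if_pos h]; ring
  · rw [if_pos h, if_neg (not_lt.2 h.le)]; ring

/-- The differential on total families. -/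
def MVD {w : ℕ} {A : Type*} [AddCommGroup A] (f : Finset (Fin w) → A) (T : Finset (Fin w)) : A :=
  ∑ j ∈ Tᶜ, MVeps T j • f (insert j T)

theorem MVD_MVD {w : ℕ} {A : Type*} [AddCommGroup A] (f : Finset (Fin w) → A)
    (T : Finset (Fin w)) : MVD (MVD f) T = 0 := by
  unfold MVD
  simp_rw [Finset.smul_sum, smul_smul]
  rw [Finset.sum_sigma']
  refine Finset.sum_involution (fun a _ => ⟨a.2, a.1⟩) ?_ ?_ ?_ ?_
  · rintro ⟨j, i⟩ h
    simp only [Finset.mem_sigma, Finset.mem_compl, Finset.mem_insert, not_or] at h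
    obtain ⟨hj, hij, hi⟩ := h
    dsimp only
    rw [MVeps_swap T j i hj hi hij, Finset.insert_comm i j, neg_smul, neg_add_cancel]
  · rintro ⟨j, i⟩ h _ heq
    simp only [Finset.mem_sigma, Finset.mem_compl, Finset.mem_insert, not_or] at h
    obtain ⟨hj, hij, hi⟩ := h
    simp only [Sigma.mk.injEq] at heq
    exact hij heq.1
  · rintro ⟨j, i⟩ h
    simp only [Finset.mem_sigma, Finset.mem_compl, Finset.mem_insert, not_or] at h ⊢
    obtain ⟨hj, hij, hi⟩ := h
    exact ⟨hi, fun e => hij e.symm, hj⟩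
  · rintro ⟨j, i⟩ h
    rfl

/-- The homotopy. -/
def MVH {w : ℕ} {A : Type*} [AddCommGroup A] (π : Fin w → A →+ A)
    (f : Finset (Fin w) → A) (U : Finset (Fin w)) : A :=
  ∑ i ∈ U, MVeps (U.erase i) i • π i (f (U.erase i))

theorem MVD_MVH {w : ℕ} {A : Type*} [AddCommGroup A] (π : Fin w → A →+ A)
    (hπ : ∀ a, ∑ i, π i a = a)
    (f : Finset (Fin w) → A) (T : Finset (Fin w))
    (hf : ∀ i ∈ T, MVD f (T.erase i) = 0) : MVD (MVH π f) T = f T := by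
  have key : ∀ i ∈ T, ∑ j ∈ Tᶜ, (MVeps T j * MVeps ((insert j T).erase i) i) •
      π i (f ((insert j T).erase i)) = π i (f T) := by
    intro i hi
    obtain ⟨V, hV, rfl⟩ : ∃ V, i ∉ V ∧ T = insert i V :=
      ⟨T.erase i, Finset.notMem_erase _ _, (Finset.insert_erase hi).symm⟩
    have h0 := hf i hi
    rw [Finset.erase_insert hV] at h0
    unfold MVD at h0
    have hc : Vᶜ = insert i (insert i V)ᶜ := by
      ext k; by_cases hk : k = i <;> simp [hk, hV]
    rw [hc, Finset.sum_insert (by simp)] at h0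
    have h1 := congrArg (fun z => MVeps V i • π i z) h0
    simp only [map_add, map_zsmul, map_sum, smul_add, smul_smul, MVeps_sq, one_smul, map_zero,
      smul_zero, Finset.smul_sum] at h1
    rw [eq_comm, eq_neg_of_add_eq_zero_left h1, ← Finset.sum_neg_distrib]
    refine Finset.sum_congr rfl fun j hj => ?_
    simp only [Finset.mem_compl, Finset.mem_insert, not_or] at hj
    have he : (insert j (insert i V)).erase i = insert j V := by
      rw [Finset.insert_comm, Finset.erase_insert]
      simp [hV, Ne.symm hj.1]
    rw [he, ← neg_smul]
    congr 1
    have e1 := MVeps_insert V i j hV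
    have e2 := MVeps_insert V j i hj.2
    rw [e1, e2]
    rcases lt_or_gt_of_ne hj.1 with h | h
    · rw [if_neg (not_lt.2 h.le), if_pos h]; ring
    · rw [if_pos h, if_neg (not_lt.2 h.le)]; ring
  calc MVD (MVH π f) T
      = ∑ j ∈ Tᶜ, (π j (f T) + ∑ i ∈ T, (MVeps T j * MVeps ((insert j T).erase i) i) •
          π i (f ((insert j T).erase i))) := by
        unfold MVD MVH
        refine Finset.sum_congr rfl fun j hj => ?_
        have hj' : j ∉ T := by simpa using hj
        rw [Finset.sum_insert hj', Finset.erase_insert hj', smul_add, smul_smul, MVeps_sq,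
          one_smul, Finset.smul_sum]
        simp_rw [smul_smul]
    _ = ∑ j ∈ Tᶜ, π j (f T) + ∑ i ∈ T, π i (f T) := by
        rw [Finset.sum_add_distrib, Finset.sum_comm, Finset.sum_congr rfl key]
    _ = f T := by
        rw [add_comm, Finset.sum_add_sum_compl, hπ]

/-- Component of an element of the complex, extended by zero. -/
def MVcomp {w : ℕ} (N : Fin w → Submodule R M) (p : ℕ) (T : Finset (Fin w)) :
    MVC N p →+ M where
  toFun x := if h : T.card = p then ((x ⟨T, h⟩ : MVsummand N T) : M) else 0
  map_zero' := by split_ifs <;> simp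
  map_add' x y := by split_ifs <;> simp

theorem MVcomp_ext {w : ℕ} (N : Fin w → Submodule R M) (p : ℕ) (x y : MVC N p)
    (h : ∀ T, T.card = p → MVcomp N p T x = MVcomp N p T y) : x = y := by
  refine DFinsupp.ext fun T => Subtype.ext ?_
  have := h T.1 T.2
  simpa [MVcomp, T.2] using this

theorem MVcomp_lof {w : ℕ} (N : Fin w → Submodule R M) (p : ℕ) (T : Finset (Fin w))
    (S : {S : Finset (Fin w) // S.card = p}) (m : MVsummand N S.1) :
    MVcomp N p T (DirectSum.lof R {T : Finset (Fin w) // T.card = p}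
            (fun T => ↥(MVsummand N T.1)) S m) = if S.1 = T then (m : M) else 0 := by
  unfold MVcomp
  obtain ⟨S, hS⟩ := S
  dsimp
  by_cases hST : S = T
  · subst hST
    rw [dif_pos hS, if_pos rfl, DirectSum.lof_apply]
  · rw [if_neg hST]
    split_ifs with h
    · rw [DirectSum.lof_eq_of, DirectSum.of_eq_of_ne]
      · rfl
      · intro e; apply hST; simpa using e.symm
    · rfl

theorem MVd_lof {w : ℕ} (N : Fin w → Submodule R M) (p : ℕ)
    (S : {S : Finset (Fin w) // S.card = p + 1}) (m : MVsummand N S.1) :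
    MVd N p (DirectSum.lof R {T : Finset (Fin w) // T.card = p + 1}
            (fun T => ↥(MVsummand N T.1)) S m) =
    ∑ j ∈ S.1.attach, ((-1 : ℤ) ^ (S.1.filter (· < j.1)).card) •
        (DirectSum.lof R {T : Finset (Fin w) // T.card = p}
            (fun T => ↥(MVsummand N T.1))
            ⟨S.1.erase j.1, by simp [Finset.card_erase_of_mem j.2, S.2]⟩
          (MVincl N (Finset.erase_subset _ _) m)) := by
  unfold MVd
  rw [DirectSum.toModule_lof, LinearMap.sum_apply]
  refine Finset.sum_congr rfl fun j _ => ?_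
  rw [LinearMap.smul_apply, LinearMap.comp_apply]

theorem MVsum_aux {w : ℕ} {A : Type*} [AddCommGroup A] (S T : Finset (Fin w)) (m : A) :
    ∑ j ∈ S, (-1 : ℤ) ^ (S.filter (· < j)).card • (if S.erase j = T then m else 0) =
    ∑ j ∈ Tᶜ, MVeps T j • (if S = insert j T then m else 0) := by
  simp only [smul_ite, smul_zero]
  rw [← Finset.sum_filter, ← Finset.sum_filter]
  have hset : S.filter (fun j => S.erase j = T) = Tᶜ.filter (fun j => S = insert j T) := by
    ext j
    simp only [Finset.mem_filter, Finset.mem_compl]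
    constructor
    · rintro ⟨h1, rfl⟩
      exact ⟨Finset.notMem_erase _ _, (Finset.insert_erase h1).symm⟩
    · rintro ⟨h1, h2⟩
      rw [h2]
      exact ⟨Finset.mem_insert_self _ _, Finset.erase_insert h1⟩
  rw [hset]
  refine Finset.sum_congr rfl fun j hj => ?_
  simp only [Finset.mem_filter, Finset.mem_compl] at hj
  congr 1
  unfold MVeps
  rw [hj.2, Finset.filter_insert, if_neg (lt_irrefl j)]

theorem MVcomp_sum {w : ℕ} (N : Fin w → Submodule R M) (p : ℕ) (T : Finset (Fin w)) {ι : Type*} (s : Finset ι) (f : ι → MVC N p) : MVcomp N p T (∑ j ∈ s, f j) = ∑ j ∈ s, MVcomp N p T (f j) := by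
  rw [map_sum]

theorem MVcomp_zsmul {w : ℕ} (N : Fin w → Submodule R M) (p : ℕ) (T : Finset (Fin w)) (n : ℤ) (f : MVC N p) : MVcomp N p T (n • f) = n • MVcomp N p T f := by
  rw [map_zsmul]

theorem MVcomp_MVd_lof_aux {w : ℕ} (N : Fin w → Submodule R M) (p : ℕ)
    (S : {S : Finset (Fin w) // S.card = p + 1}) (m : MVsummand N S.1)
    (T : Finset (Fin w)) :
    MVcomp N p T (MVd N p (DirectSum.lof R {T : Finset (Fin w) // T.card = p + 1}
            (fun T => ↥(MVsummand N T.1)) S m)) = MVcomp N p T (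
    ∑ j ∈ S.1.attach, ((-1 : ℤ) ^ (S.1.filter (· < j.1)).card) •
        (DirectSum.lof R {T : Finset (Fin w) // T.card = p}
            (fun T => ↥(MVsummand N T.1))
            ⟨S.1.erase j.1, by simp [Finset.card_erase_of_mem j.2, S.2]⟩
          (MVincl N (Finset.erase_subset _ _) m))) := by
  rw [MVd_lof]

theorem MVcomp_sum_lof {w : ℕ} (N : Fin w → Submodule R M) (p : ℕ)
    (S : {S : Finset (Fin w) // S.card = p + 1}) (m : MVsummand N S.1)
    (T : Finset (Fin w)) :
    MVcomp N p T (
    ∑ j ∈ S.1.attach, ((-1 : ℤ) ^ (S.1.filter (· < j.1)).card) •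
        (DirectSum.lof R {T : Finset (Fin w) // T.card = p}
            (fun T => ↥(MVsummand N T.1))
            ⟨S.1.erase j.1, by simp [Finset.card_erase_of_mem j.2, S.2]⟩
          (MVincl N (Finset.erase_subset _ _) m))) =
    ∑ j ∈ S.1.attach, ((-1 : ℤ) ^ (S.1.filter (· < j.1)).card) • MVcomp N p T (
        (DirectSum.lof R {T : Finset (Fin w) // T.card = p}
            (fun T => ↥(MVsummand N T.1))
            ⟨S.1.erase j.1, by simp [Finset.card_erase_of_mem j.2, S.2]⟩
          (MVincl N (Finset.erase_subset _ _) m))) := by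
  rw [MVcomp_sum]
  refine Finset.sum_congr rfl fun j _ => ?_
  rw [MVcomp_zsmul]

theorem MVincl_coe {w : ℕ} (N : Fin w → Submodule R M) {S T : Finset (Fin w)} (h : T ⊆ S)
    (m : MVsummand N S) : ((MVincl N h m : MVsummand N T) : M) = m := by
  unfold MVincl
  exact Submodule.coe_inclusion _ _

theorem MVcomp_lof_mk {w : ℕ} (N : Fin w → Submodule R M) (p : ℕ) (T : Finset (Fin w))
    (S : Finset (Fin w)) (hS : S.card = p) (m : MVsummand N S) :
    MVcomp N p T (DirectSum.lof R {T : Finset (Fin w) // T.card = p}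
            (fun T => ↥(MVsummand N T.1)) ⟨S, hS⟩ m) = if S = T then (m : M) else 0 :=
  MVcomp_lof N p T ⟨S, hS⟩ m

theorem MVcomp_lof_incl {w : ℕ} (N : Fin w → Submodule R M) (p : ℕ)
    (S : {S : Finset (Fin w) // S.card = p + 1}) (m : MVsummand N S.1)
    (T : Finset (Fin w)) (j : S.1) : MVcomp N p T (
        (DirectSum.lof R {T : Finset (Fin w) // T.card = p}
            (fun T => ↥(MVsummand N T.1))
            ⟨S.1.erase j.1, by simp [Finset.card_erase_of_mem j.2, S.2]⟩
          (MVincl N (Finset.erase_subset _ _) m))) = if S.1.erase j.1 = T then (m : M) else 0 := by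
  rw [MVcomp_lof_mk, MVincl_coe]

theorem MVsum_comp_lof {w : ℕ} (N : Fin w → Submodule R M) (p : ℕ)
    (S : {S : Finset (Fin w) // S.card = p + 1}) (m : MVsummand N S.1)
    (T : Finset (Fin w)) :
    ∑ j ∈ S.1.attach, ((-1 : ℤ) ^ (S.1.filter (· < j.1)).card) • MVcomp N p T (
        (DirectSum.lof R {T : Finset (Fin w) // T.card = p}
            (fun T => ↥(MVsummand N T.1))
            ⟨S.1.erase j.1, by simp [Finset.card_erase_of_mem j.2, S.2]⟩
          (MVincl N (Finset.erase_subset _ _) m))) = ∑ j ∈ S.1.attach, ((-1 : ℤ) ^ (S.1.filter (· < j.1)).card) • if S.1.erase j.1 = T then (m : M) else 0 := by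
  refine Finset.sum_congr rfl fun j _ => ?_
  rw [MVcomp_lof_incl]

theorem MVsum_aux_attach {w : ℕ} (S : Finset (Fin w)) (m : M)
    (T : Finset (Fin w)) :
  ∑ j ∈ S.attach, ((-1 : ℤ) ^ (S.filter (· < j.1)).card) • (if S.erase j.1 = T then (m : M) else 0) =
    ∑ j ∈ Tᶜ, MVeps T j • (if S = insert j T then (m : M) else 0) := by
  rw [← MVsum_aux]
  exact Finset.sum_attach S (fun j => (-1 : ℤ) ^ (S.filter (· < j)).card •
      (if S.erase j = T then (m : M) else 0))

theorem MVcomp_MVd_lof {w : ℕ} (N : Fin w → Submodule R M) (p : ℕ)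
    (S : {S : Finset (Fin w) // S.card = p + 1}) (m : MVsummand N S.1)
    (T : Finset (Fin w)) :
    MVcomp N p T (MVd N p (DirectSum.lof R {T : Finset (Fin w) // T.card = p + 1}
            (fun T => ↥(MVsummand N T.1)) S m)) =
    ∑ j ∈ Tᶜ, MVeps T j • (if S.1 = insert j T then (m : M) else 0) :=
  (MVcomp_MVd_lof_aux N p S m T).trans <| (MVcomp_sum_lof N p S m T).trans <| (MVsum_comp_lof N p S m T).trans (MVsum_aux_attach S.1 (m : M) T)

theorem MVcomp_MVd {w : ℕ} (N : Fin w → Submodule R M) (p : ℕ) (x : MVC N (p + 1))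
    (T : Finset (Fin w)) :
    MVcomp N p T (MVd N p x) = MVD (fun S => MVcomp N (p + 1) S x) T := by
  induction x using DirectSum.induction_on with
  | zero => simp [MVD]
  | add x y hx hy =>
    rw [map_add, map_add, hx, hy]
    simp only [map_add, MVD, smul_add, Finset.sum_add_distrib]
  | of S m =>
    rw [← DirectSum.lof_eq_of R, MVcomp_MVd_lof]
    unfold MVD
    simp only [MVcomp_lof]

theorem MVexists_proj {w : ℕ} (N : Fin w → Submodule R M)
    (B : Set M) (hB : LinearIndependent R (fun b : B => (b : M)))
    (Bi : Fin w → Set M) (hBiB : ∀ i, Bi i ⊆ B)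
    (hNi : ∀ i, N i = Submodule.span R (Bi i)) :
    ∃ π : Fin w → (↥(⨆ i, N i) →ₗ[R] ↥(⨆ i, N i)),
      (∀ x, ∑ i, π i x = x) ∧ (∀ i x, (π i x : M) ∈ N i) ∧
      ∀ i k (x : ↥(⨆ i, N i)), (x : M) ∈ N k → (π i x : M) ∈ N k := by
  classical
  have hB' : LinearIndependent R (fun b : (⋃ i, Bi i : Set M) => (b : M)) :=
    LinearIndepOn.mono (v := id) (s := B) (t := ⋃ i, Bi i) hB (Set.iUnion_subset hBiB)
  have hN : (⨆ i, N i) = Submodule.span R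
      (Set.range (fun b : (⋃ i, Bi i : Set M) => (b : M))) := by
    rw [Subtype.range_coe, Submodule.span_iUnion]
    simp_rw [hNi]
  rw [hN]
  let b := Module.Basis.span hB'
  have hb : ∀ x, ((b x : _) : M) = x := fun x =>
    congrArg Subtype.val (Module.Basis.span_apply hB' x)
  have hc : ∀ x : (⋃ i, Bi i : Set M), ∃ i, (x : M) ∈ Bi i := fun x => Set.mem_iUnion.1 x.2
  choose c hc using hc
  let π : Fin w → (_ →ₗ[R] _) := fun i => b.constr ℕ (fun x => if c x = i then b x else 0)
  have hπ : ∀ i x, π i (b x) = if c x = i then b x else 0 := fun i x => b.constr_basis ℕ _ x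
  refine ⟨π, ?_, ?_, ?_⟩
  · intro x
    have : ∑ i, π i = LinearMap.id := b.ext fun x => by simp [hπ]
    simpa using congrArg (fun f => f x) this
  · intro i x
    have : ⊤ ≤ (N i).comap ((Submodule.subtype _).comp (π i)) := by
      rw [← b.span_eq, Submodule.span_le]
      rintro _ ⟨x, rfl⟩
      simp only [SetLike.mem_coe, Submodule.mem_comap, LinearMap.comp_apply, hπ]
      split_ifs with h
      · rw [Submodule.subtype_apply, hb, hNi, ← h]
        exact Submodule.subset_span (hc x)
      · simp
    exact this Submodule.mem_top
  · intro i k x hx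
    have hle : N k ≤ ((N k).comap ((Submodule.subtype _).comp (π i))).map
        (Submodule.subtype _) := by
      conv_lhs => rw [hNi k]
      rw [Submodule.span_le]
      intro y hy
      let y' : (⋃ i, Bi i : Set M) := ⟨y, Set.mem_iUnion.2 ⟨k, hy⟩⟩
      refine ⟨b y', ?_, hb y'⟩
      simp only [SetLike.mem_coe, Submodule.mem_comap, LinearMap.comp_apply, hπ]
      split_ifs with h
      · rw [Submodule.subtype_apply, hb, hNi]
        exact Submodule.subset_span hy
      · simp
    obtain ⟨z, hz, hzx⟩ := hle hx
    have : z = x := Subtype.ext hzx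
    subst this
    exact hz

theorem MVsummand_empty_mem {w : ℕ} (N : Fin w → Submodule R M) (S : Finset (Fin w))
    (hS : S.card = 0) (m : M) : m ∈ MVsummand N S := by
  rw [Finset.card_eq_zero] at hS
  subst hS
  simp [MVsummand]

theorem MVsummand_le {w : ℕ} (N : Fin w → Submodule R M) (S : Finset (Fin w))
    {i : Fin w} (hi : i ∈ S) : MVsummand N S ≤ N i := iInf₂_le i hi

theorem MVd0_eq {w : ℕ} (N : Fin w → Submodule R M) (x : MVC N 0) :
    MVd0 N x = Submodule.mkQ (⨆ i, N i) (MVcomp N 0 ∅ x) := by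
  induction x using DirectSum.induction_on with
  | zero => simp
  | add x y hx hy => simp only [map_add, hx, hy]
  | of S m =>
    rw [← DirectSum.lof_eq_of R, MVcomp_lof, MVd0, DirectSum.toModule_lof,
      if_pos (Finset.card_eq_zero.1 S.2)]
    rfl

theorem MVd_comp {w : ℕ} (N : Fin w → Submodule R M) (p : ℕ) (x : MVC N (p + 1 + 1)) :
    MVd N p (MVd N (p + 1) x) = 0 := by
  refine MVcomp_ext N p _ _ fun T _ => ?_
  rw [MVcomp_MVd]
  simp_rw [MVcomp_MVd]
  rw [map_zero]
  exact MVD_MVD _ T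

/-- Build an element of the complex out of a family. -/
theorem MVexists_of_family {w : ℕ} (N : Fin w → Submodule R M) (p : ℕ)
    (f : Finset (Fin w) → M) (hf : ∀ S, S.card = p → f S ∈ MVsummand N S)
    (hf0 : ∀ S, S.card ≠ p → f S = 0) :
    ∃ y : MVC N p, ∀ S, MVcomp N p S y = f S := by
  classical
  refine ⟨DFinsupp.equivFunOnFintype.symm (fun S => ⟨f S.1, hf S.1 S.2⟩), fun S => ?_⟩
  by_cases h : S.card = p
  · simp only [MVcomp, AddMonoidHom.coe_mk, ZeroHom.coe_mk, dif_pos h]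
    rfl
  · simp [MVcomp, h, hf0 S h]

/-- if `N = N₁ + ⋯ + N_w` is free on a basis `B ⊆ M` and each `N_i` is the
span of a subset `B_i ⊆ B`, then the Mayer–Vietoris complex is acyclic: `d_0` is
surjective, `ker d_0 = range d_1`, and `ker d_p = range d_{p+1}` for all `p ≥ 1`
(here `MVd N p` is `d_{p+1}`, so the last conjunct, quantified over all `p : ℕ`,
covers `1 ≤ p ≤ w`; for `p > w` all modules involved are zero). -/
theorem stmt3 {w : ℕ} (hw : 1 ≤ w) (N : Fin w → Submodule R M)
    (B : Set M) (hB : LinearIndependent R (fun b : B => (b : M)))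
    (hBspan : Submodule.span R B = ⨆ i, N i)
    (Bi : Fin w → Set M) (hBiB : ∀ i, Bi i ⊆ B)
    (hNi : ∀ i, N i = Submodule.span R (Bi i)) :
    Function.Surjective (MVd0 N) ∧
    LinearMap.ker (MVd0 N) = LinearMap.range (MVd N 0) ∧
    ∀ p : ℕ, LinearMap.ker (MVd N p) = LinearMap.range (MVd N (p + 1)) := by
  obtain ⟨π, hsum, hπi, hπk⟩ := MVexists_proj N B hB Bi hBiB hNi
  refine ⟨?_, ?_, ?_⟩
  · intro q
    obtain ⟨m, rfl⟩ := Submodule.mkQ_surjective _ q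
    refine ⟨DirectSum.lof R {T : Finset (Fin w) // T.card = 0}
      (fun T => ↥(MVsummand N T.1)) ⟨∅, rfl⟩ ⟨m, MVsummand_empty_mem N ∅ rfl m⟩, ?_⟩
    rw [MVd0_eq, MVcomp_lof, if_pos rfl]
  · ext x
    rw [LinearMap.mem_ker, LinearMap.mem_range, MVd0_eq, Submodule.mkQ_apply,
      Submodule.Quotient.mk_eq_zero]
    constructor
    · intro hx
      obtain ⟨y, hy⟩ := MVexists_of_family N 1
        (fun S => if S.card = 1 then ∑ i ∈ S, (π i ⟨_, hx⟩ : M) else 0)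
        (by
          intro S hS
          obtain ⟨i, rfl⟩ := Finset.card_eq_one.1 hS
          simpa [MVsummand] using hπi i ⟨_, hx⟩)
        (by intro S hS; simp [hS])
      refine ⟨y, MVcomp_ext N 0 _ _ fun T hT => ?_⟩
      rw [Finset.card_eq_zero] at hT
      subst hT
      rw [MVcomp_MVd]
      simp_rw [hy]
      have := congrArg (Subtype.val) (hsum ⟨_, hx⟩)
      simpa [MVD, MVeps] using this
    · rintro ⟨y, rfl⟩
      rw [MVcomp_MVd]
      refine Submodule.sum_mem _ fun j _ => zsmul_mem ?_ _
      unfold MVcomp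
      simp only [AddMonoidHom.coe_mk, ZeroHom.coe_mk]
      split_ifs with h
      · exact Submodule.mem_iSup_of_mem j
          (MVsummand_le N _ (Finset.mem_insert_self j ∅) (Subtype.property _))
      · exact Submodule.zero_mem _
  · intro p
    ext x
    rw [LinearMap.mem_ker, LinearMap.mem_range]
    constructor
    swap
    · rintro ⟨y, rfl⟩
      exact MVd_comp N p y
    intro hx
    have hmemS : ∀ S, ∀ i ∈ S, MVcomp N (p + 1) S x ∈ N i := by
      intro S i hi
      unfold MVcomp
      simp only [AddMonoidHom.coe_mk, ZeroHom.coe_mk]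
      split_ifs with h
      · exact MVsummand_le N _ hi (Subtype.property _)
      · exact Submodule.zero_mem _
    have hmem : ∀ S, MVcomp N (p + 1) S x ∈ ⨆ i, N i := by
      intro S
      by_cases h : S.card = p + 1
      · obtain ⟨i, hi⟩ : S.Nonempty := Finset.card_pos.1 (by omega)
        exact Submodule.mem_iSup_of_mem i (hmemS S i hi)
      · simp [MVcomp, h]
    let f : Finset (Fin w) → ↥(⨆ i, N i) := fun S => ⟨MVcomp N (p + 1) S x, hmem S⟩
    let π' : Fin w → (↥(⨆ i, N i) →+ ↥(⨆ i, N i)) := fun i => (π i).toAddMonoidHom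
    have hDf : ∀ T, MVD f T = 0 := by
      intro T
      have h := MVcomp_MVd N p x T
      rw [hx, map_zero] at h
      apply Subtype.ext
      rw [Submodule.coe_zero, h]
      simp [MVD, f]
    obtain ⟨y, hy⟩ := MVexists_of_family N (p + 1 + 1) (fun U => ((MVH π' f U : ↥(⨆ i, N i)) : M))
      (by
        intro S hS
        simp only [MVsummand, Submodule.mem_iInf]
        intro k hk
        simp only [MVH, Submodule.coe_sum]
        refine Submodule.sum_mem _ fun i hi => ?_
        rw [show ∀ (n : ℤ) (z : ↥(⨆ i, N i)), ((n • z : ↥(⨆ i, N i)) : M) = n • (z : M) from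
          fun n z => rfl]
        refine zsmul_mem ?_ _
        by_cases hki : k = i
        · subst hki
          exact hπi k _
        · exact hπk i k _ (hmemS _ k (Finset.mem_erase.2 ⟨hki, hk⟩)))
      (by
        intro S hS
        have : MVH π' f S = 0 := by
          refine Finset.sum_eq_zero fun i hi => ?_
          have : f (S.erase i) = 0 := by
            apply Subtype.ext
            have hcard := Finset.card_erase_add_one hi
            have : (S.erase i).card ≠ p + 1 := by omega
            simp [f, MVcomp, this]
          rw [this, map_zero, smul_zero]
        rw [this, Submodule.coe_zero])
    refine ⟨y, MVcomp_ext N (p + 1) _ _ fun T hT => ?_⟩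
    rw [MVcomp_MVd]
    simp_rw [hy]
    have := congrArg Subtype.val (MVD_MVH π' hsum f T (fun i _ => hDf _))
    rw [show MVcomp N (p + 1) T x = (f T : M) from rfl, ← this]
    simp [MVD]

end MayerVietoris
end

section
/- Let n ≥ 2 and let T ⊆ ZMod n be innermost with MS(T) = ZMod n. Then n is even, and either T = {x : ZMod n | x.val is even} or T = {x : ZMod n | x.val is odd}, where x.val ∈ {0, …, n−1} denotes the canonical representative of x. -/
/-- The moral support `MS(T) = T ∪ (T + 1)` of a subset `T ⊆ ZMod n`. -/
def moralSupport (n : ℕ) (T : Set (ZMod n)) : Set (ZMod n) :=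
  T ∪ {x | ∃ t ∈ T, x = t + 1}

/-- `T ⊆ ZMod n` is innermost: no two distinct elements `i ≠ j` of `T` satisfy
`i = j + 1`. -/
def Innermost (n : ℕ) (T : Set (ZMod n)) : Prop :=
  ∀ i ∈ T, ∀ j ∈ T, i ≠ j → i ≠ j + 1

/-- if `T ⊆ ZMod n` is innermost and `MS(T) = ZMod n`, then `n` is even
and `T` consists of exactly the elements with even canonical representative, or
exactly those with odd canonical representative. -/
theorem stmt12 (n : ℕ) (hn : 2 ≤ n) (T : Set (ZMod n)) (hT : Innermost n T)
    (hMS : moralSupport n T = Set.univ) :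
    Even n ∧
      (T = {x : ZMod n | Even x.val} ∨ T = {x : ZMod n | Odd x.val}) := by
  haveI : Fact (1 < n) := ⟨hn⟩
  haveI : NeZero n := ⟨by omega⟩
  have hne : ∀ x : ZMod n, x + 1 ≠ x := by
    intro x h
    exact one_ne_zero (add_eq_left.mp h)
  have step : ∀ x : ZMod n, x + 1 ∈ T ↔ x ∉ T := by
    intro x
    constructor
    · intro h1 h2
      exact hT _ h1 _ h2 (hne x) rfl
    · intro h
      have hx : x + 1 ∈ moralSupport n T := by rw [hMS]; trivial
      rcases hx with hx | ⟨t, ht, hxt⟩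
      · exact hx
      · exact absurd ((add_right_cancel hxt) ▸ ht) h
  have key : ∀ k : ℕ, ((k : ZMod n) ∈ T ↔ (Even k ↔ (0 : ZMod n) ∈ T)) := by
    intro k
    induction k with
    | zero => simp
    | succ k ih =>
      rw [Nat.cast_succ, step, ih, Nat.even_add_one]
      tauto
  have hEven : Even n := by
    have h := key n
    rw [ZMod.natCast_self] at h
    tauto
  refine ⟨hEven, ?_⟩
  have key' : ∀ x : ZMod n, (x ∈ T ↔ (Even x.val ↔ (0 : ZMod n) ∈ T)) := by
    intro x
    have h := key x.val
    rwa [ZMod.natCast_zmod_val] at h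
  by_cases h0 : (0 : ZMod n) ∈ T
  · left
    ext x
    rw [key' x]
    simp [h0]
  · right
    ext x
    rw [key' x]
    simp [h0]
end

section
/- Let n ≥ 1 and let p be an annular link state on ZMod n having at least one part of cardinality 2. Then there exists k ∈ ZMod n such that {k, k + 1} is a part of p. -/
/-- The open cyclic interval `(a, b)` in `ZMod n`:
the set `{a + k : k ∈ ℕ, 0 < k < (b − a).val}`. -/
def cycInt (n : ℕ) (a b : ZMod n) : Set (ZMod n) :=
  {x | ∃ k : ℕ, 0 < k ∧ k < (b - a).val ∧ x = a + (k : ZMod n)}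

/-- An annular link state on `ZMod n`: a partition of `ZMod n` (a collection of
pairwise disjoint nonempty subsets covering `ZMod n`) all of whose parts have
cardinality 1 or 2, such that for every part `{i, j}` of cardinality 2: no part of
cardinality 2 has one element in `(i,j)` and one in `(j,i)`; and either every
singleton part is contained in `(i,j)` or every singleton part is contained in
`(j,i)`. -/
structure AnnularLinkState (n : ℕ) where
  parts : Set (Set (ZMod n))
  parts_nonempty : ∀ p ∈ parts, p.Nonempty
  parts_disjoint : ∀ p ∈ parts, ∀ q ∈ parts, p ≠ q → Disjoint p q
  parts_cover : ∀ x : ZMod n, ∃ p ∈ parts, x ∈ p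
  parts_card : ∀ p ∈ parts, p.ncard = 1 ∨ p.ncard = 2
  noncrossing : ∀ i j : ZMod n, i ≠ j → {i, j} ∈ parts →
    ∀ p ∈ parts, p.ncard = 2 →
      ¬ ∃ x ∈ p, ∃ y ∈ p, x ∈ cycInt n i j ∧ y ∈ cycInt n j i
  defects_one_side : ∀ i j : ZMod n, i ≠ j → {i, j} ∈ parts →
    (∀ p ∈ parts, p.ncard = 1 → p ⊆ cycInt n i j) ∨
    (∀ p ∈ parts, p.ncard = 1 → p ⊆ cycInt n j i)

theorem cyc_mem_iff (n : ℕ) [NeZero n] (a b x : ZMod n) :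
    x ∈ cycInt n a b ↔ 0 < (x - a).val ∧ (x - a).val < (b - a).val := by
  constructor
  · rintro ⟨k, h0, h1, rfl⟩
    have hk : k < n := h1.trans (ZMod.val_lt _)
    rw [add_sub_cancel_left, ZMod.val_natCast_of_lt hk]
    exact ⟨h0, h1⟩
  · rintro ⟨h0, h1⟩
    refine ⟨(x - a).val, h0, h1, ?_⟩
    rw [ZMod.natCast_zmod_val]
    ring

theorem cyc_swap_val (n : ℕ) [NeZero n] (i j : ZMod n) (hij : i ≠ j) :
    (i - j).val + (j - i).val = n := by
  have h : i - j = -(j - i) := by ring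
  haveI : NeZero (j - i) := ⟨sub_ne_zero.mpr hij.symm⟩
  have := ZMod.val_lt (j - i)
  rw [h, ZMod.val_neg_of_ne_zero]
  omega

theorem cyc_disj (n : ℕ) [NeZero n] (i j x : ZMod n) (hij : i ≠ j)
    (h1 : x ∈ cycInt n i j) (h2 : x ∈ cycInt n j i) : False := by
  rw [cyc_mem_iff] at h1 h2
  have hs := cyc_swap_val n i j hij
  have h : x - i = (x - j) + (j - i) := by ring
  have hv : (x - i).val = (x - j).val + (j - i).val := by
    rw [h]
    exact ZMod.val_add_of_lt (by omega)
  omega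

theorem cyc_tri (n : ℕ) [NeZero n] (i j x : ZMod n) (hij : i ≠ j) (hi : x ≠ i) (hj : x ≠ j) :
    x ∈ cycInt n i j ∨ x ∈ cycInt n j i := by
  rw [cyc_mem_iff, cyc_mem_iff]
  have hs := cyc_swap_val n i j hij
  have h0 : 0 < (x - i).val := ZMod.val_pos.mpr (sub_ne_zero.mpr hi)
  have h0' : 0 < (x - j).val := ZMod.val_pos.mpr (sub_ne_zero.mpr hj)
  by_cases hlt : (x - i).val < (j - i).val
  · exact Or.inl ⟨h0, hlt⟩
  · right
    have h : x - j = (x - i) - (j - i) := by ring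
    have hv : (x - j).val = (x - i).val - (j - i).val := by
      rw [h]
      exact ZMod.val_sub (by omega)
    have := ZMod.val_lt (x - i)
    exact ⟨h0', by omega⟩

theorem link_aux (n : ℕ) [NeZero n] (p : AnnularLinkState n) (d : ℕ) :
    ∀ i j : ZMod n, i ≠ j → {i, j} ∈ p.parts → (j - i).val = d →
      (∀ q ∈ p.parts, q.ncard = 1 → ∀ x ∈ q, x ∉ cycInt n i j) →
      ∃ k : ZMod n, {k, k + 1} ∈ p.parts := by
  induction d using Nat.strong_induction_on with
  | _ d ih =>
    intro i j hij hp hd hs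
    have hdpos : 0 < d := by
      rw [← hd]
      exact ZMod.val_pos.mpr (sub_ne_zero.mpr hij.symm)
    have hdn : d < n := hd ▸ ZMod.val_lt _
    by_cases h1 : d = 1
    · refine ⟨i, ?_⟩
      have : j = i + 1 := by
        have h := ZMod.natCast_zmod_val (j - i)
        rw [hd, h1] at h
        push_cast at h
        rw [h]
        ring
      rw [← this]
      exact hp
    have hmem : i + 1 ∈ cycInt n i j := ⟨1, one_pos, by omega, by simp⟩
    obtain ⟨q, hq, hxq⟩ := p.parts_cover (i + 1)
    have hq2 : q.ncard = 2 := by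
      rcases p.parts_card q hq with h | h
      · exact absurd hmem (hs q hq h _ hxq)
      · exact h
    have hex : ∃ y, i + 1 ≠ y ∧ q = {i + 1, y} := by
      obtain ⟨a, b, hab, rfl⟩ := Set.ncard_eq_two.mp hq2
      rcases hxq with h | h
      · exact ⟨b, by rw [h]; exact hab, by rw [h]⟩
      · rw [Set.mem_singleton_iff] at h
        exact ⟨a, by rw [h]; exact hab.symm, by rw [h]; exact Set.pair_comm _ _⟩
    obtain ⟨y, hy, rfl⟩ := hex
    have hm := (cyc_mem_iff n i j (i + 1)).mp hmem
    have hne : ({i + 1, y} : Set (ZMod n)) ≠ {i, j} := by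
      intro h
      rw [h] at hxq
      rcases hxq with h | h
      · rw [h] at hm
        simp at hm
      · rw [Set.mem_singleton_iff] at h
        rw [h] at hm
        omega
    have hdis := Set.disjoint_left.mp (p.parts_disjoint _ hq _ hp hne)
    have hyn : y ∉ ({i, j} : Set (ZMod n)) := hdis (by simp)
    have hyi : y ≠ i := fun h => hyn (by simp [h])
    have hyj : y ≠ j := fun h => hyn (by simp [h])
    have hyin : y ∈ cycInt n i j := by
      rcases cyc_tri n i j y hij hyi hyj with h | h
      · exact h
      · exact absurd ⟨i + 1, hxq, y, by simp, hmem, h⟩ (p.noncrossing i j hij hp _ hq hq2)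
    obtain ⟨k, hk0, hk1, rfl⟩ := hyin
    have hk2 : k ≠ 1 := by
      rintro rfl
      simp at hy
    obtain ⟨m, rfl⟩ : ∃ m, k = m + 1 := ⟨k - 1, by omega⟩
    have hval : (i + ((m + 1 : ℕ) : ZMod n) - (i + 1)).val = m := by
      have : i + ((m + 1 : ℕ) : ZMod n) - (i + 1) = (m : ZMod n) := by
        push_cast
        ring
      rw [this]
      exact ZMod.val_natCast_of_lt (by omega)
    refine ih m (by omega) (i + 1) _ hy hq hval ?_
    rintro r hr hr1 x hx ⟨l, hl0, hl1, rfl⟩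
    refine hs r hr hr1 _ hx ⟨l + 1, by omega, by omega, ?_⟩
    push_cast
    ring

/-- an annular link state on `ZMod n` having at least one part of
cardinality 2 has a part of the form `{k, k+1}`. -/
theorem stmt13 (n : ℕ) (hn : 1 ≤ n) (p : AnnularLinkState n)
    (h : ∃ q ∈ p.parts, q.ncard = 2) :
    ∃ k : ZMod n, {k, k + 1} ∈ p.parts := by
  haveI : NeZero n := ⟨by omega⟩
  obtain ⟨q, hq, hq2⟩ := h
  obtain ⟨i, j, hij, rfl⟩ := Set.ncard_eq_two.mp hq2
  rcases p.defects_one_side i j hij hq with h | h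
  · refine link_aux n p _ j i hij.symm (by rw [Set.pair_comm]; exact hq) rfl ?_
    intro q hq h1 x hx hx'
    exact cyc_disj n i j x hij (h q hq h1 hx) hx'
  · refine link_aux n p _ i j hij hq rfl ?_
    intro q hq h1 x hx hx'
    exact cyc_disj n i j x hij hx' (h q hq h1 hx)
end

section
/- Let n ≥ 3 and let T ⊆ ZMod n. There exists an annular link state p on ZMod n such that {i, i + 1} is a part of p for every i ∈ T, if and only if T is innermost. -/
theorem aux_empty (n : ℕ) (hn : 3 ≤ n) (i x : ZMod n) : x ∉ cycInt n i (i + 1) := by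
  rintro ⟨k, h0, h1, -⟩
  have : Fact (1 < n) := ⟨by omega⟩
  rw [add_sub_cancel_left, ZMod.val_one] at h1
  omega

theorem aux_mem (n : ℕ) (hn : 3 ≤ n) (i x : ZMod n) (h1 : x ≠ i) (h2 : x ≠ i + 1) :
    x ∈ cycInt n (i + 1) i := by
  have : NeZero n := ⟨by omega⟩
  refine ⟨(x - (i + 1)).val, ?_, ?_, ?_⟩
  · rw [Nat.pos_iff_ne_zero, Ne, ZMod.val_eq_zero, sub_eq_zero]
    exact h2
  · have e : i - (i + 1) = -1 := by ring
    obtain ⟨m, rfl⟩ : ∃ m, n = m + 1 := ⟨n - 1, by omega⟩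
    have hv : (x - (i + 1)).val < m + 1 := ZMod.val_lt _
    have hne : (x - (i + 1)).val ≠ (-1 : ZMod (m + 1)).val := by
      intro h
      have := ZMod.val_injective _ h
      apply h1
      linear_combination this
    rw [ZMod.val_neg_one] at hne
    rw [e, ZMod.val_neg_one]
    omega
  · rw [ZMod.natCast_zmod_val]
    ring

theorem stmt14 (n : ℕ) (hn : 3 ≤ n) (T : Set (ZMod n)) :
    (∃ p : AnnularLinkState n, ∀ i ∈ T, {i, i + 1} ∈ p.parts) ↔ Innermost n T := by
  have : NeZero n := ⟨by omega⟩
  have : Fact (1 < n) := ⟨by omega⟩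
  have ne1 : ∀ i : ZMod n, i ≠ i + 1 := by
    intro i h
    have : (1 : ZMod n) = 0 := by linear_combination -h
    exact one_ne_zero this
  have ne2 : ∀ i : ZMod n, i ≠ i + 1 + 1 := by
    intro i h
    have h2 : ((2 : ℕ) : ZMod n) = 0 := by push_cast; linear_combination -h
    rw [ZMod.natCast_eq_zero_iff] at h2
    have := Nat.le_of_dvd (by norm_num) h2
    omega
  constructor
  · rintro ⟨p, hp⟩ i hi j hj hij rfl
    have hne : ({j, j + 1} : Set (ZMod n)) ≠ {j + 1, j + 1 + 1} := by
      intro h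
      have : j ∈ ({j + 1, j + 1 + 1} : Set (ZMod n)) := by rw [← h]; simp
      rcases this with h | h
      · exact ne1 j h
      · exact ne2 j h
    have := p.parts_disjoint _ (hp _ hj) _ (hp _ hi) hne
    have h3 := Set.disjoint_left.1 this
    exact @h3 (j + 1) (by simp) (by simp)
  · intro hT
    have hT' : ∀ j ∈ T, j + 1 ∉ T := fun j hj h => hT _ h _ hj (ne1 j).symm rfl
    have key : ∀ a b : ZMod n, a ≠ b → (({a, b} : Set (ZMod n)) ∈
        {p : Set (ZMod n) | (∃ i ∈ T, p = {i, i + 1}) ∨ (∃ x, x ∉ T ∧ x - 1 ∉ T ∧ p = {x})}) →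
        ∃ i ∈ T, (a = i ∧ b = i + 1) ∨ (a = i + 1 ∧ b = i) := by
      rintro a b hab (⟨i, hi, h⟩ | ⟨x, -, -, h⟩)
      · exact ⟨i, hi, Set.pair_eq_pair_iff.1 h⟩
      · have ha : a ∈ ({x} : Set (ZMod n)) := by rw [← h]; simp
        have hb : b ∈ ({x} : Set (ZMod n)) := by rw [← h]; simp
        exact absurd (ha.trans hb.symm) hab
    refine ⟨⟨{p | (∃ i ∈ T, p = {i, i + 1}) ∨ (∃ x, x ∉ T ∧ x - 1 ∉ T ∧ p = {x})},
      ?_, ?_, ?_, ?_, ?_, ?_⟩, fun i hi => Or.inl ⟨i, hi, rfl⟩⟩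
    · rintro p (⟨i, hi, rfl⟩ | ⟨x, -, -, rfl⟩) <;> simp
    · have sd : ∀ i ∈ T, ∀ x, x ∉ T → x - 1 ∉ T → x ∉ ({i, i + 1} : Set (ZMod n)) := by
        rintro i hi x hx hx1 (rfl | rfl)
        · exact hx hi
        · apply hx1
          simpa using hi
      rintro p (⟨i, hi, rfl⟩ | ⟨x, hx, hx1, rfl⟩) q (⟨j, hj, rfl⟩ | ⟨y, hy, hy1, rfl⟩) hne
      · rw [Set.disjoint_left]
        have hij : i ≠ j := by rintro rfl; exact hne rfl
        rintro a (rfl | rfl) (h | h)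
        · exact hij h
        · exact hT' j hj (h ▸ hi)
        · exact hT' i hi (h ▸ hj)
        · exact hij (add_right_cancel h)
      · exact Set.disjoint_singleton_right.2 (sd i hi y hy hy1)
      · exact Set.disjoint_singleton_left.2 (sd j hj x hx hx1)
      · exact Set.disjoint_singleton_left.2 (fun h => hne (by rw [Set.mem_singleton_iff.1 h]))
    · intro x
      by_cases hx : x ∈ T
      · exact ⟨_, Or.inl ⟨x, hx, rfl⟩, by simp⟩
      by_cases hx1 : x - 1 ∈ T
      · exact ⟨_, Or.inl ⟨x - 1, hx1, rfl⟩, by simp⟩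
      · exact ⟨_, Or.inr ⟨x, hx, hx1, rfl⟩, by simp⟩
    · rintro p (⟨i, hi, rfl⟩ | ⟨x, -, -, rfl⟩)
      · exact Or.inr (Set.ncard_pair (ne1 i))
      · exact Or.inl (Set.ncard_singleton x)
    · rintro a b hab h p hp hc ⟨x, hx, y, hy, h1, h2⟩
      obtain ⟨i, hi, ⟨rfl, rfl⟩ | ⟨rfl, rfl⟩⟩ := key a b hab h
      · exact aux_empty n hn _ _ h1
      · exact aux_empty n hn _ _ h2
    · intro a b hab h
      obtain ⟨i, hi, hor⟩ := key a b hab h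
      have main : ∀ p ∈ {p : Set (ZMod n) | (∃ i ∈ T, p = {i, i + 1}) ∨
          (∃ x, x ∉ T ∧ x - 1 ∉ T ∧ p = {x})}, p.ncard = 1 → p ⊆ cycInt n (i + 1) i := by
        rintro p (⟨j, hj, rfl⟩ | ⟨x, hx, hx1, rfl⟩) hc
        · rw [Set.ncard_pair (ne1 j)] at hc
          omega
        · rw [Set.singleton_subset_iff]
          apply aux_mem n hn
          · rintro rfl; exact hx hi
          · rintro rfl; apply hx1; simpa using hi
      rcases hor with ⟨rfl, rfl⟩ | ⟨rfl, rfl⟩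
      · exact Or.inr main
      · exact Or.inl main
end
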